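/- Let K be a field, let m, n >= 1, and let M be a monomial in K[u_{ij} : (i,j) in [m] x [n]]. Then there exists w in S^{m,n}_infty such that r_M(i,j) = r_w(i,j) for all (i,j) in [m] x [n]. -/

import Mathlib

namespace Paper

/-!
We model a permutation of the positive integers `{1, 2, 3, ...}` as an `Equiv.Perm ℕ`
that fixes `0`; all notions below refer only to positive inputs.
-/

/-- The rank `r_w(i,j) = #{a ∈ [i] : w(a) ∈ [j]}` of the `i × j` partial
permutation matrix of `w`, where `[k] = {1, ..., k}`. -/
def rnk (w : Equiv.Perm ℕ) (i j : ℕ) : ℕ :=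
  ((Finset.Icc 1 i).filter fun a => w a ∈ Finset.Icc 1 j).card

/-- Right descent set `Des_R(w) = {i ≥ 1 : w(i) > w(i+1)}`. -/
def DesR (w : Equiv.Perm ℕ) : Set ℕ := {i | 1 ≤ i ∧ w (i + 1) < w i}

/-- Left descent set `Des_L(w) = Des_R(w⁻¹)`. -/
def DesL (w : Equiv.Perm ℕ) : Set ℕ := DesR w⁻¹

/-- `S_∞`: permutations of the positive integers fixing all but finitely many points. -/
def SInfty : Set (Equiv.Perm ℕ) :=
  {w | w 0 = 0 ∧ Set.Finite {i : ℕ | w i ≠ i}}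

/-- `S^{m,n}_∞ = {w ∈ S_∞ : Des_R(w) ⊆ [m], Des_L(w) ⊆ [n]}`. -/
def SmnInfty (m n : ℕ) : Set (Equiv.Perm ℕ) :=
  {w | w ∈ SInfty ∧ DesR w ⊆ Set.Icc 1 m ∧ DesL w ⊆ Set.Icc 1 n}

/-- The Rothe diagram `D(w) = {(i,j) : 0 < j < w(i), 0 < i < w⁻¹(j)}`. -/
def Rothe (w : Equiv.Perm ℕ) : Set (ℕ × ℕ) :=
  {p | 0 < p.2 ∧ p.2 < w p.1 ∧ 0 < p.1 ∧ p.1 < w⁻¹ p.2}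

/-- The function `1_FPF`, sending `i ↦ i - (-1)^i` on positive integers (it fixes `0`). -/
def oneFPF : ℕ → ℕ := fun i => if i % 2 = 1 then i + 1 else i - 1

/-- `I^FPF_∞`: fixed-point-free involutions of the positive integers agreeing with
`1_FPF` at all sufficiently large inputs. -/
def IFPFInfty : Set (Equiv.Perm ℕ) :=
  {z | z 0 = 0 ∧ (∀ i, 1 ≤ i → z i ≠ i) ∧ z * z = 1 ∧ ∃ N, ∀ i, N ≤ i → z i = oneFPF i}

/-- The skew-symmetric Rothe diagram `D^ss(z) = {(i,j) : 0 < j < z(i), j < i < z(j)}`. -/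
def Dss (z : Equiv.Perm ℕ) : Set (ℕ × ℕ) :=
  {p | 0 < p.2 ∧ p.2 < z p.1 ∧ p.2 < p.1 ∧ p.1 < z p.2}

/-- `FPF_n(I_n) = {z ∈ I^FPF_∞ : D^ss(z) ⊆ [n] × [n]}`. -/
def FPFIn (n : ℕ) : Set (Equiv.Perm ℕ) :=
  {z | z ∈ IFPFInfty ∧ Dss z ⊆ Set.Icc 1 n ×ˢ Set.Icc 1 n}

/-- `ℓ_fpf(z) = |D^ss(z)|`. -/
noncomputable def ellFpf (z : Equiv.Perm ℕ) : ℕ := (Dss z).ncard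

/-- Bruhat order on `I^FPF_∞`: reflexive-transitive closure of `z < (i,j) z (i,j)`
whenever `i < j` and `ℓ_fpf` goes up by exactly one. -/
def fpfBruhatLe (z y : Equiv.Perm ℕ) : Prop :=
  Relation.ReflTransGen
    (fun a b => ∃ i j : ℕ, 1 ≤ i ∧ i < j ∧
      b = Equiv.swap i j * a * Equiv.swap i j ∧ ellFpf b = ellFpf a + 1) z y

/-- `i` is a visible descent of `z` if `i ≥ 1` and `z(i+1) < min(i, z(i))`. -/
def visibleDescent (z : Equiv.Perm ℕ) (i : ℕ) : Prop :=
  1 ≤ i ∧ z (i + 1) < min i (z i)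

/-- `Ψ(z, p) = {(p,r) z (p,r) : r > p, ℓ_fpf((p,r) z (p,r)) = ℓ_fpf(z) + 1}`. -/
def PsiSet (z : Equiv.Perm ℕ) (p : ℕ) : Set (Equiv.Perm ℕ) :=
  {y | ∃ r : ℕ, p < r ∧ y = Equiv.swap p r * z * Equiv.swap p r ∧ ellFpf y = ellFpf z + 1}

/-- The dominant component `dom(z) = {(i,j) : i, j ≥ 1, r_z(i,j) = 0}`. -/
def domSet (z : Equiv.Perm ℕ) : Set (ℕ × ℕ) :=
  {p | 1 ≤ p.1 ∧ 1 ≤ p.2 ∧ rnk z p.1 p.2 = 0}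

/-- `(p, q)` is an outer corner of `dom(z)`. -/
def IsOuterCorner (z : Equiv.Perm ℕ) (p q : ℕ) : Prop :=
  1 ≤ p ∧ 1 ≤ q ∧ (p, q) ∉ domSet z ∧
    (p = 1 ∨ (p - 1, q) ∈ domSet z) ∧ (q = 1 ∨ (p, q - 1) ∈ domSet z)

/-- `I_n`: involutions in `S_∞` fixing every `i > n`. -/
def InvolIn (n : ℕ) : Set (Equiv.Perm ℕ) :=
  {w | w 0 = 0 ∧ w * w = 1 ∧ ∀ i, n < i → w i = i}

/-- The fixed points of `z` lying in `[n]`. -/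
def fixedPtsIn (n : ℕ) (z : Equiv.Perm ℕ) : Finset ℕ :=
  (Finset.Icc 1 n).filter fun i => z i = i

/-- The function swapping `m + 2t - 1` and `m + 2t` for every `t ≥ 1`, fixing all other points. -/
def tailSwapFun (m : ℕ) : ℕ → ℕ := fun i =>
  if i ≤ m then i else if (i - m) % 2 = 1 then i + 1 else i - 1

theorem tailSwapFun_involutive (m : ℕ) : Function.Involutive (tailSwapFun m) := by
  intro i
  unfold tailSwapFun
  split_ifs <;> omega

/-- The involution swapping `m + 2t - 1` and `m + 2t` for every `t ≥ 1`. -/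
def tailSwap (m : ℕ) : Equiv.Perm ℕ :=
  Function.Involutive.toPerm _ (tailSwapFun_involutive m)

/-- The fixed-point-free standardization `FPF_n(z) = z ⋅ (i_1,n+1)⋯(i_k,n+k) ⋅ c`,
where `i_1 < ⋯ < i_k` are the fixed points of `z` in `[n]` and `c` swaps
`n+k+2t-1, n+k+2t` for all `t ≥ 1`. -/
noncomputable def fpfStd (n : ℕ) (z : Equiv.Perm ℕ) : Equiv.Perm ℕ :=
  z *
    (List.ofFn fun t : Fin (fixedPtsIn n z).card =>
      Equiv.swap ((fixedPtsIn n z).orderEmbOfFin rfl t) (n + (t : ℕ) + 1)).prod *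
    tailSwap (n + (fixedPtsIn n z).card)

/-- `Mat^ss_n(K)`: skew-symmetric `n × n` matrices (transpose is the negative, zero diagonal).
Row/column index `a : Fin n` corresponds to the (1-indexed) row/column `a + 1`. -/
def MatSS (K : Type*) [CommRing K] (n : ℕ) : Set (Matrix (Fin n) (Fin n) K) :=
  {A | A.transpose = -A ∧ ∀ i, A i i = 0}

/-- The skew-symmetric matrix Schubert variety
`X^ss_z = {A ∈ Mat^ss_n : rank A_{[i][j]} ≤ r_z(i,j) for all i, j ∈ [n]}`. -/
noncomputable def Xss (K : Type*) [Field K] (n : ℕ) (z : Equiv.Perm ℕ) :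
    Set (Matrix (Fin n) (Fin n) K) :=
  {A | A ∈ MatSS K n ∧ ∀ (i j : ℕ) (hi : i ≤ n) (hj : j ≤ n), 1 ≤ i → 1 ≤ j →
    (A.submatrix (Fin.castLE hi) (Fin.castLE hj)).rank ≤ rnk z i j}

/-- `#{(i,j) : i > j, j < z(i), i < z(j)}` for a permutation of `Fin N`
(the `0`-indexed version of `ℓ_fpf`). -/
def ellFpfFin {N : ℕ} (z : Equiv.Perm (Fin N)) : ℕ :=
  (Finset.univ.filter fun p : Fin N × Fin N => p.2 < p.1 ∧ p.2 < z p.1 ∧ p.1 < z p.2).card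

/-- The Pfaffian of an `N × N` matrix:
`pf(A) = ∑_{z fpf involution of [N]} (-1)^{ℓ_fpf(z)} ∏_{z(i) < i} A_{z(i), i}`.
(The sum is empty, hence `0`, when `N` is odd.) -/
noncomputable def Pfaffian {R : Type*} [CommRing R] {N : ℕ} (A : Matrix (Fin N) (Fin N) R) : R :=
  ∑ z ∈ Finset.univ.filter (fun z : Equiv.Perm (Fin N) => (∀ i, z i ≠ i) ∧ ∀ i, z (z i) = i),
    (-1 : R) ^ ellFpfFin z * ∏ i ∈ Finset.univ.filter (fun i : Fin N => z i < i), A (z i) i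

/-- Index set for the variables `u_{ij}`, `n ≥ i > j ≥ 1`, of the coordinate ring
`R_n = K[Mat^ss_n]`; the variable `⟨(a, b), _⟩` is `u_{a+1, b+1}`. -/
abbrev SSVar (n : ℕ) : Type := {p : Fin n × Fin n // p.2 < p.1}

/-- The generic skew-symmetric matrix `U^ss` over `R_n`. -/
noncomputable def Uss (K : Type*) [CommRing K] (n : ℕ) :
    Matrix (Fin n) (Fin n) (MvPolynomial (SSVar n) K) :=
  Matrix.of fun i j =>
    if h : j < i then MvPolynomial.X ⟨(i, j), h⟩
    else if h' : i < j then -MvPolynomial.X ⟨(j, i), h'⟩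
    else 0

/-- The ideal of polynomials vanishing on a set `X`, where a point `A` is evaluated
via `ev A : σ → K`. -/
noncomputable def vanishingIdeal {K : Type*} [CommRing K] {σ M : Type*}
    (X : Set M) (ev : M → σ → K) : Ideal (MvPolynomial σ K) where
  carrier := {f | ∀ A ∈ X, MvPolynomial.eval (ev A) f = 0}
  zero_mem' := by simp
  add_mem' := by
    intro f g hf hg
    simp only [Set.mem_setOf_eq] at *
    intro A hA
    rw [map_add, hf A hA, hg A hA, add_zero]
  smul_mem' := by
    intro c f hf
    simp only [Set.mem_setOf_eq] at *
    intro A hA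
    rw [smul_eq_mul, map_mul, hf A hA, mul_zero]

/-- `I(X^ss_z) ⊆ R_n`, where `u_{ij}` is evaluated at `A` as `A_{ij}`. -/
noncomputable def IXss (K : Type*) [Field K] (n : ℕ) (z : Equiv.Perm ℕ) :
    Ideal (MvPolynomial (SSVar n) K) :=
  vanishingIdeal (Xss K n z) fun A v => A v.1.1 v.1.2

/-- `pf(U^ss_{RR})` for a finite row/column set `R` (listed in increasing order). -/
noncomputable def pfUss (K : Type*) [CommRing K] {n : ℕ} (R : Finset (Fin n)) :
    MvPolynomial (SSVar n) K :=
  Pfaffian ((Uss K n).submatrix (fun s => R.orderEmbOfFin rfl s) fun t => R.orderEmbOfFin rfl t)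

/-- The ideal `I^ss_z`, generated by the Pfaffians `pf(U^ss_{RR})` over all nonempty
even-size `R ⊆ [n]` such that `R ⊆ [i]` and `|R ∩ [j]| > r_z(i,j)` for some `i ≥ j`. -/
noncomputable def IssIdeal (K : Type*) [Field K] (n : ℕ) (z : Equiv.Perm ℕ) :
    Ideal (MvPolynomial (SSVar n) K) :=
  Ideal.span {f : MvPolynomial (SSVar n) K | ∃ R : Finset (Fin n),
    R.Nonempty ∧ Even R.card ∧
    (∃ i j : ℕ, 1 ≤ j ∧ j ≤ i ∧ i ≤ n ∧ (∀ a ∈ R, (a : ℕ) + 1 ≤ i) ∧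
      rnk z i j < (R.filter fun a : Fin n => (a : ℕ) + 1 ≤ j).card) ∧
    f = pfUss K R}

/-- The square-free monomial `u^ss_{AB}`: zero if `A ⊙ B` meets the diagonal, and otherwise
the product of the variables `u_{ij}` over the pairs `i > j` with `(i,j)` or `(j,i)` in
`A ⊙ B = {(a_0, b_r), (a_1, b_{r-1}), ..., (a_r, b_0)}`. -/
noncomputable def ussMon (K : Type*) [CommRing K] {n : ℕ} (A B : Finset (Fin n)) :
    MvPolynomial (SSVar n) K :=
  if h : A.card = B.card then
    if ∃ t : Fin A.card, (A.orderEmbOfFin rfl t : Fin n) = B.orderEmbOfFin h.symm t.rev then 0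
    else
      ∏ v ∈ Finset.univ.filter (fun v : SSVar n => ∃ t : Fin A.card,
          (A.orderEmbOfFin rfl t = v.1.1 ∧ B.orderEmbOfFin h.symm t.rev = v.1.2) ∨
          (A.orderEmbOfFin rfl t = v.1.2 ∧ B.orderEmbOfFin h.symm t.rev = v.1.1)),
        MvPolynomial.X v
  else 0

/-- The monomial ideal `J^ss_r` of a symmetric rank table `r`, generated by the monomials
`u^ss_{AB}` with `A ⊆ [i]`, `B ⊆ [j]`, `|A| = |B| = r(i,j) + 1` for some `n ≥ i ≥ j ≥ 1`. -/
noncomputable def JssIdealOfTable (K : Type*) [CommRing K] (n : ℕ) (r : ℕ → ℕ → ℕ) :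
    Ideal (MvPolynomial (SSVar n) K) :=
  Ideal.span {g : MvPolynomial (SSVar n) K | ∃ (i j : ℕ) (A B : Finset (Fin n)),
    1 ≤ j ∧ j ≤ i ∧ i ≤ n ∧
    (∀ a ∈ A, (a : ℕ) + 1 ≤ i) ∧ (∀ b ∈ B, (b : ℕ) + 1 ≤ j) ∧
    A.card = r i j + 1 ∧ B.card = r i j + 1 ∧ g = ussMon K A B}

/-- `J^ss_z = J^ss_{r_z}`. -/
noncomputable def JssIdeal (K : Type*) [CommRing K] (n : ℕ) (z : Equiv.Perm ℕ) :
    Ideal (MvPolynomial (SSVar n) K) :=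
  JssIdealOfTable K n (rnk z)

/-- Total degree of a monomial (exponent vector). -/
def totalDeg {σ : Type*} (m : σ →₀ ℕ) : ℕ := m.sum fun _ e => e

/-- The lexicographic order on the variables `u_{ij}` by the pair `(i, j)`. -/
def varLT {n : ℕ} (v w : SSVar n) : Prop :=
  v.1.1 < w.1.1 ∨ (v.1.1 = w.1.1 ∧ v.1.2 < w.1.2)

/-- The (graded) reverse lexicographic term order on monomials of `R_n`:
`m₁ < m₂` iff `deg m₁ < deg m₂`, or the degrees agree and the lexicographically largest
variable with different exponents has strictly larger exponent in `m₁`. -/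
def revlexLT {n : ℕ} (m₁ m₂ : SSVar n →₀ ℕ) : Prop :=
  totalDeg m₁ < totalDeg m₂ ∨
    (totalDeg m₁ = totalDeg m₂ ∧ ∃ v, m₂ v < m₁ v ∧ ∀ w, varLT v w → m₁ w = m₂ w)

/-- The initial ideal of `I` with respect to a strict term order `lt`: the ideal
generated by the leading monomials `init(f)` of the nonzero `f ∈ I`. -/
noncomputable def initIdeal {K : Type*} [CommRing K] {σ : Type*}
    (lt : (σ →₀ ℕ) → (σ →₀ ℕ) → Prop) (I : Ideal (MvPolynomial σ K)) :
    Ideal (MvPolynomial σ K) :=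
  Ideal.span {g : MvPolynomial σ K | ∃ f ∈ I, f ≠ 0 ∧ ∃ m : σ →₀ ℕ, m ∈ f.support ∧
    (∀ m' ∈ f.support, m' ≠ m → lt m' m) ∧ g = MvPolynomial.monomial m (1 : K)}

/-- A term order on the monomials of a polynomial ring: a linear order in which `1` is
the unique minimum and multiplication by a fixed monomial preserves order. -/
structure TermOrder (σ : Type*) where
  le : (σ →₀ ℕ) → (σ →₀ ℕ) → Prop
  trans : ∀ a b c, le a b → le b c → le a c
  antisymm : ∀ a b, le a b → le b a → a = b
  total : ∀ a b, le a b ∨ le b a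
  zero_le : ∀ a, le 0 a
  add_le_add_right : ∀ a b c, le a b → le (a + c) (b + c)

/-- The initial ideal of `I` with respect to a term order `τ`. -/
noncomputable def initIdealLe {K : Type*} [CommRing K] {σ : Type*}
    (τ : TermOrder σ) (I : Ideal (MvPolynomial σ K)) : Ideal (MvPolynomial σ K) :=
  Ideal.span {g : MvPolynomial σ K | ∃ f ∈ I, f ≠ 0 ∧ ∃ m : σ →₀ ℕ, m ∈ f.support ∧
    (∀ m' ∈ f.support, τ.le m' m) ∧ g = MvPolynomial.monomial m (1 : K)}

/-- An ideal is homogeneous (w.r.t. total degree) iff it contains all homogeneous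
components of its elements. -/
def IsHomogIdeal {K : Type*} [CommSemiring K] {σ : Type*}
    (I : Ideal (MvPolynomial σ K)) : Prop :=
  ∀ f ∈ I, ∀ d : ℕ, MvPolynomial.homogeneousComponent d f ∈ I

/-- The reading order on boxes: rows top to bottom, each row right to left. -/
def pdRel (p q : ℕ × ℕ) : Prop := p.1 < q.1 ∨ (p.1 = q.1 ∧ q.2 ≤ p.2)

instance : DecidableRel pdRel := fun p q => by unfold pdRel; infer_instance

instance : IsTrans (ℕ × ℕ) pdRel :=
  ⟨fun a b c hab hbc => by unfold pdRel at *; omega⟩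

instance : IsAntisymm (ℕ × ℕ) pdRel :=
  ⟨fun a b hab hba => by
    unfold pdRel at hab hba
    exact Prod.ext_iff.mpr ⟨by omega, by omega⟩⟩

instance : IsTotal (ℕ × ℕ) pdRel :=
  ⟨fun a b => by unfold pdRel; omega⟩

/-- The pipe dream reading word of a finite set `D` of boxes: the letters `i + j - 1`
over `(i, j) ∈ D`, in the order making `(i, -j)` increase lexicographically. -/
def pdWord (D : Finset (ℕ × ℕ)) : List ℕ :=
  (D.sort pdRel).map fun p => p.1 + p.2 - 1

/-- The product `s_{i_1} s_{i_2} ⋯ s_{i_l}` of simple transpositions. -/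
def wordProd (l : List ℕ) : Equiv.Perm ℕ :=
  (l.map fun i => Equiv.swap i (i + 1)).prod

/-- `l` is a reduced word for `w`: a minimal-length word of positive letters whose
product of simple transpositions is `w`. -/
def IsReducedWordOf (w : Equiv.Perm ℕ) (l : List ℕ) : Prop :=
  (∀ a ∈ l, 1 ≤ a) ∧ wordProd l = w ∧
    ∀ l' : List ℕ, (∀ a ∈ l', 1 ≤ a) → wordProd l' = w → l.length ≤ l'.length

/-- The set `RP(w)` of reduced pipe dreams for `w`. -/
def RP (w : Equiv.Perm ℕ) : Set (Finset (ℕ × ℕ)) :=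
  {D | (∀ p ∈ D, 1 ≤ p.1 ∧ 1 ≤ p.2) ∧ IsReducedWordOf w (pdWord D)}

/-- `I^FPF_m`: involutions in `S_∞` that are fixed-point-free on `[m]` and fix
all `i > m`. -/
def IFPFm (m : ℕ) : Set (Equiv.Perm ℕ) :=
  {y | y 0 = 0 ∧ y * y = 1 ∧ (∀ i, 1 ≤ i → i ≤ m → y i ≠ i) ∧ ∀ i, m < i → y i = i}

/-- `z = FPF_m(y)`: `z` agrees with `y` on `[m]` and swaps `m + 2k - 1, m + 2k`
for all `k ≥ 1`. -/
def IsFPFStdOf (m : ℕ) (y z : Equiv.Perm ℕ) : Prop :=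
  (∀ i, i ≤ m → z i = y i) ∧
    ∀ k : ℕ, z (m + 2 * k + 1) = m + 2 * k + 2 ∧ z (m + 2 * k + 2) = m + 2 * k + 1

/-- The set `FP(z)` of fpf-involution pipe dreams for `z ∈ I^FPF_∞`. -/
def FP (z : Equiv.Perm ℕ) : Set (Finset (ℕ × ℕ)) :=
  {E | ∃ (m : ℕ) (y : Equiv.Perm ℕ) (D : Finset (ℕ × ℕ)), Even m ∧ y ∈ IFPFm m ∧
    IsFPFStdOf m y z ∧ D ∈ RP y ∧ D.image Prod.swap = D ∧
    E = D.filter fun p => p.2 < p.1}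

/-- The minor `det(U_{AB})` of the generic `m × n` matrix `U`, with rows `A` and
columns `B` listed in increasing order. -/
noncomputable def genMinor (K : Type*) [CommRing K] {m n : ℕ}
    (A : Finset (Fin m)) (B : Finset (Fin n)) (h : A.card = B.card) :
    MvPolynomial (Fin m × Fin n) K :=
  (Matrix.of fun s t : Fin A.card =>
    (MvPolynomial.X (A.orderEmbOfFin rfl s, B.orderEmbOfFin h.symm t) :
      MvPolynomial (Fin m × Fin n) K)).det

/-- The antidiagonal monomial `u_{AB} = ∏_{(a,b) ∈ A ⊙ B} u_{ab}`. -/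
noncomputable def genMon (K : Type*) [CommRing K] {m n : ℕ}
    (A : Finset (Fin m)) (B : Finset (Fin n)) (h : A.card = B.card) :
    MvPolynomial (Fin m × Fin n) K :=
  ∏ t : Fin A.card, MvPolynomial.X (A.orderEmbOfFin rfl t, B.orderEmbOfFin h.symm t.rev)

/-- The exponent vector of the antidiagonal monomial `u_{AB}`. -/
noncomputable def antidiagExp {m n : ℕ} (A : Finset (Fin m)) (B : Finset (Fin n))
    (h : A.card = B.card) : (Fin m × Fin n) →₀ ℕ :=
  ∑ t : Fin A.card, Finsupp.single (A.orderEmbOfFin rfl t, B.orderEmbOfFin h.symm t.rev) 1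

/-- The ideal `I_w`, generated by the minors `det(U_{AB})` with `A ⊆ [i]`, `B ⊆ [j]`,
`|A| = |B| = r_w(i,j) + 1` for some `(i,j) ∈ [m] × [n]`. -/
noncomputable def IwIdeal (K : Type*) [Field K] (m n : ℕ) (w : Equiv.Perm ℕ) :
    Ideal (MvPolynomial (Fin m × Fin n) K) :=
  Ideal.span {g : MvPolynomial (Fin m × Fin n) K |
    ∃ (i j : ℕ) (A : Finset (Fin m)) (B : Finset (Fin n)) (h : A.card = B.card),
      1 ≤ i ∧ i ≤ m ∧ 1 ≤ j ∧ j ≤ n ∧ (∀ a ∈ A, (a : ℕ) + 1 ≤ i) ∧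
      (∀ b ∈ B, (b : ℕ) + 1 ≤ j) ∧ A.card = rnk w i j + 1 ∧ g = genMinor K A B h}

/-- The monomial ideal `J_w`, generated by the monomials `u_{AB}` with `A ⊆ [i]`,
`B ⊆ [j]`, `|A| = |B| = r_w(i,j) + 1` for some `(i,j) ∈ [m] × [n]`. -/
noncomputable def JwIdeal (K : Type*) [Field K] (m n : ℕ) (w : Equiv.Perm ℕ) :
    Ideal (MvPolynomial (Fin m × Fin n) K) :=
  Ideal.span {g : MvPolynomial (Fin m × Fin n) K |
    ∃ (i j : ℕ) (A : Finset (Fin m)) (B : Finset (Fin n)) (h : A.card = B.card),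
      1 ≤ i ∧ i ≤ m ∧ 1 ≤ j ∧ j ≤ n ∧ (∀ a ∈ A, (a : ℕ) + 1 ≤ i) ∧
      (∀ b ∈ B, (b : ℕ) + 1 ≤ j) ∧ A.card = rnk w i j + 1 ∧ g = genMon K A B h}

/-- The matrix Schubert variety
`X_w = {A ∈ Mat_{m×n} : rank A_{[i][j]} ≤ r_w(i,j) for all (i,j) ∈ [m] × [n]}`. -/
noncomputable def Xw (K : Type*) [Field K] (m n : ℕ) (w : Equiv.Perm ℕ) :
    Set (Matrix (Fin m) (Fin n) K) :=
  {A | ∀ (i j : ℕ) (hi : i ≤ m) (hj : j ≤ n), 1 ≤ i → 1 ≤ j →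
    (A.submatrix (Fin.castLE hi) (Fin.castLE hj)).rank ≤ rnk w i j}

/-- `I(X_w)`: the ideal of polynomials vanishing on `X_w`. -/
noncomputable def IXw (K : Type*) [Field K] (m n : ℕ) (w : Equiv.Perm ℕ) :
    Ideal (MvPolynomial (Fin m × Fin n) K) :=
  vanishingIdeal (Xw K m n w) fun A v => A v.1 v.2

/-- The variable `u_{pq}` (with `1 ≤ q < p ≤ n`) of `R_n`. -/
def ssvar {n : ℕ} (p q : ℕ) (hp : p ≤ n) (hq : 1 ≤ q) (hqp : q < p) : SSVar n :=
  ⟨(⟨p - 1, by omega⟩, ⟨q - 1, by omega⟩), Fin.mk_lt_mk.mpr (by omega)⟩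

/-- Index set for the variables `u_{ij}`, `i > j ≥ 1`, over all positive integers. -/
abbrev PVar : Type := {p : ℕ × ℕ // 1 ≤ p.2 ∧ p.2 < p.1}

/-- The generic skew-symmetric array `U^ss` over the positive integers:
`u_{xy}` if `x > y`, `-u_{yx}` if `x < y`, `0` if `x = y`. -/
noncomputable def UssP (K : Type*) [CommRing K] (x y : ℕ) : MvPolynomial PVar K :=
  if h : 1 ≤ y ∧ y < x then MvPolynomial.X ⟨(x, y), h⟩
  else if h' : 1 ≤ x ∧ x < y then -MvPolynomial.X ⟨(y, x), h'⟩
  else 0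

/-- `pf(U^ss_{RR})` for a finite set `R` of positive integers. -/
noncomputable def pfUssP (K : Type*) [CommRing K] (R : Finset ℕ) : MvPolynomial PVar K :=
  Pfaffian (Matrix.of fun s t : Fin R.card =>
    UssP K (R.orderEmbOfFin rfl s) (R.orderEmbOfFin rfl t))

/-- `g_{AB}`: the Pfaffian of the `(|B|+|A|) × (|B|+|A|)` skew-symmetric matrix whose
rows and columns are labeled by `B` (increasing) followed by `A` (increasing), with
entry `U^ss_{xy}` at a position labeled `(x, y)`, except that the entry is `0` when
both labels come from the `A`-block. -/
noncomputable def gAB (K : Type*) [CommRing K] (A B : Finset ℕ) : MvPolynomial PVar K :=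
  Pfaffian ((Matrix.of fun p q : Fin B.card ⊕ Fin A.card =>
      match p, q with
      | Sum.inl s, Sum.inl t => UssP K (B.orderEmbOfFin rfl s) (B.orderEmbOfFin rfl t)
      | Sum.inl s, Sum.inr t => UssP K (B.orderEmbOfFin rfl s) (A.orderEmbOfFin rfl t)
      | Sum.inr s, Sum.inl t => UssP K (A.orderEmbOfFin rfl s) (B.orderEmbOfFin rfl t)
      | Sum.inr _, Sum.inr _ => (0 : MvPolynomial PVar K)).submatrix
    finSumFinEquiv.symm finSumFinEquiv.symm)

/-- The exponent of the sign `⟨T, S⟩ = (-1)^{|S||T| + C(|S|,2) + ∑ of the (1-indexed)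
positions in the increasing enumeration of `T` occupied by elements of `S`}`. -/
def setSgnExp (T S : Finset ℕ) : ℕ :=
  S.card * T.card + Nat.choose S.card 2 +
    ∑ t : Fin T.card, if T.orderEmbOfFin rfl t ∈ S then (t : ℕ) + 1 else 0

/-!
Only the support `S` of `M` matters: `r_M(i,j)` is the maximal size of a set of points of `S` in
the northwest `i × j` corner that runs strictly from northeast to southwest. These numbers grow by
at most one per row and per column, and they satisfy the Monge inequality
`r(i,j') + r(i',j) ≤ r(i',j') + r(i,j)` for `i ≤ i'`, `j ≤ j'`: a maximal chain for `(i,j')` and one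
for `(i',j)` can be cut along a common row and recombined into chains for `(i',j')` and `(i,j)`.

An array with these properties is the rank function of a partial permutation matrix, whose ones
sit where the mixed second difference is `1`. Replacing the array on `[m] × [n]` by
`R(i,j) = min(i, j, r(min(i,m), min(j,n)) + (i-m)⁺ + (j-n)⁺)`
turns the partial permutation into a permutation `w`. Below row `m` every entry of `R` grows by one
per row until it is saturated at `j`, which excludes descents of `w` after `m`; by symmetry
`w⁻¹` has no descents after `n`.
-/

section Antidiagonal

variable {α β γ δ : Type*} [LinearOrder α] [LinearOrder β] [LinearOrder γ] [LinearOrder δ]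

/-- The point `x` lies strictly northeast of `y`, in matrix coordinates (row, column). -/
def StrictNE (x y : α × β) : Prop := x.1 < y.1 ∧ y.2 < x.2

/-- A finite set of matrix positions that runs strictly from northeast to southwest; these are
the sets `A ⊙ B`. -/
abbrev IsAntidiagonal (C : Finset (α × β)) : Prop := IsChain StrictNE (C : Set (α × β))

namespace IsAntidiagonal

variable {C : Finset (α × β)} {x y : α × β}

theorem snd_le_of_fst_le (hC : IsAntidiagonal C) (hx : x ∈ C) (hy : y ∈ C) (h : x.1 ≤ y.1) :
    y.2 ≤ x.2 := by
  rcases eq_or_ne x y with rfl | hxy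
  · exact le_rfl
  · rcases hC hx hy hxy with hNE | hNE
    · exact hNE.2.le
    · exact absurd hNE.1 h.not_gt

theorem snd_lt_of_fst_lt (hC : IsAntidiagonal C) (hx : x ∈ C) (hy : y ∈ C) (h : x.1 < y.1) :
    y.2 < x.2 := by
  rcases hC hx hy (fun hxy => h.ne (congrArg Prod.fst hxy)) with hNE | hNE
  · exact hNE.2
  · exact absurd hNE.1 h.not_gt

theorem injOn_fst (hC : IsAntidiagonal C) : Set.InjOn Prod.fst (C : Set (α × β)) := by
  intro x hx y hy hxy
  by_contra hne
  rcases hC hx hy hne with hNE | hNE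
  · exact hNE.1.ne hxy
  · exact hNE.1.ne' hxy

theorem injOn_snd (hC : IsAntidiagonal C) : Set.InjOn Prod.snd (C : Set (α × β)) := by
  intro x hx y hy hxy
  by_contra hne
  rcases hC hx hy hne with hNE | hNE
  · exact hNE.2.ne' hxy
  · exact hNE.2.ne hxy

end IsAntidiagonal

/-- The set `A ⊙ B`. -/
def antidiagonal (A : Finset α) (B : Finset β) (h : A.card = B.card) : Finset (α × β) :=
  Finset.univ.map
    ⟨fun t : Fin A.card => (A.orderEmbOfFin rfl t, B.orderEmbOfFin h.symm t.rev),
      fun _ _ hst => (A.orderEmbOfFin rfl).injective (congrArg Prod.fst hst)⟩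

theorem mem_antidiagonal {A : Finset α} {B : Finset β} {h : A.card = B.card} {x : α × β} :
    x ∈ antidiagonal A B h ↔
      ∃ t : Fin A.card, (A.orderEmbOfFin rfl t, B.orderEmbOfFin h.symm t.rev) = x := by
  simp only [antidiagonal, Finset.mem_map, Finset.mem_univ, true_and]
  rfl

theorem card_antidiagonal (A : Finset α) (B : Finset β) (h : A.card = B.card) :
    (antidiagonal A B h).card = A.card := by
  simp [antidiagonal]

theorem isAntidiagonal_antidiagonal (A : Finset α) (B : Finset β) (h : A.card = B.card) :
    IsAntidiagonal (antidiagonal A B h) := by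
  have strictNE_of_lt {s t : Fin A.card} (hst : s < t) :
      StrictNE (A.orderEmbOfFin rfl s, B.orderEmbOfFin h.symm s.rev)
        (A.orderEmbOfFin rfl t, B.orderEmbOfFin h.symm t.rev) :=
    ⟨(A.orderEmbOfFin rfl).strictMono hst,
      (B.orderEmbOfFin h.symm).strictMono (Fin.rev_lt_rev.2 hst)⟩
  intro x hx y hy hxy
  obtain ⟨s, rfl⟩ := mem_antidiagonal.1 hx
  obtain ⟨t, rfl⟩ := mem_antidiagonal.1 hy
  have hst : s ≠ t := fun hst => hxy (by rw [hst])
  exact hst.lt_or_gt.imp strictNE_of_lt strictNE_of_lt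

theorem fst_mem_of_mem_antidiagonal {A : Finset α} {B : Finset β} {h : A.card = B.card}
    {x : α × β} (hx : x ∈ antidiagonal A B h) : x.1 ∈ A := by
  obtain ⟨t, rfl⟩ := mem_antidiagonal.1 hx
  exact A.orderEmbOfFin_mem rfl t

theorem snd_mem_of_mem_antidiagonal {A : Finset α} {B : Finset β} {h : A.card = B.card}
    {x : α × β} (hx : x ∈ antidiagonal A B h) : x.2 ∈ B := by
  obtain ⟨t, rfl⟩ := mem_antidiagonal.1 hx
  exact B.orderEmbOfFin_mem h.symm t.rev

theorem IsAntidiagonal.card_image_fst_eq_card_image_snd {C : Finset (α × β)}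
    (hC : IsAntidiagonal C) : (C.image Prod.fst).card = (C.image Prod.snd).card := by
  rw [Finset.card_image_of_injOn hC.injOn_fst, Finset.card_image_of_injOn hC.injOn_snd]

theorem IsAntidiagonal.antidiagonal_image_fst_image_snd {C : Finset (α × β)}
    (hC : IsAntidiagonal C) :
    antidiagonal (C.image Prod.fst) (C.image Prod.snd) hC.card_image_fst_eq_card_image_snd =
      C := by
  let A := C.image Prod.fst
  let B := C.image Prod.snd
  have exists_col (t : Fin A.card) : ∃ b, (A.orderEmbOfFin rfl t, b) ∈ C := by
    obtain ⟨x, hx, hxt⟩ := Finset.mem_image.1 (A.orderEmbOfFin_mem rfl t)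
    exact ⟨x.2, hxt ▸ hx⟩
  choose col hcol using exists_col
  have col_rev_strictMono : StrictMono fun t : Fin A.card => col t.rev := fun s t hst =>
    hC.snd_lt_of_fst_lt (hcol t.rev) (hcol s.rev)
      ((A.orderEmbOfFin rfl).strictMono (Fin.rev_lt_rev.2 hst))
  have col_rev_eq : (fun t : Fin A.card => col t.rev) =
      B.orderEmbOfFin hC.card_image_fst_eq_card_image_snd.symm :=
    Finset.orderEmbOfFin_unique _ (fun t => Finset.mem_image_of_mem Prod.snd (hcol t.rev))
      col_rev_strictMono
  have col_eq (t : Fin A.card) :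
      col t = B.orderEmbOfFin hC.card_image_fst_eq_card_image_snd.symm t.rev := by
    simpa only [Fin.rev_rev] using congrFun col_rev_eq t.rev
  refine Finset.eq_of_subset_of_card_le (fun x hx => ?_) ?_
  · obtain ⟨t, rfl⟩ := mem_antidiagonal.1 hx
    exact col_eq t ▸ hcol t
  · rw [card_antidiagonal, Finset.card_image_of_injOn hC.injOn_fst]

open Classical in
/-- The maximal size of an antidiagonal contained in `S`. -/
noncomputable def antidiagRank (S : Finset (α × β)) : ℕ :=
  (S.powerset.filter IsAntidiagonal).sup Finset.card

theorem IsAntidiagonal.card_le_antidiagRank {C S : Finset (α × β)} (hC : IsAntidiagonal C)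
    (hCS : C ⊆ S) : C.card ≤ antidiagRank S := by
  classical
  exact Finset.le_sup (f := Finset.card)
    (Finset.mem_filter.2 ⟨Finset.mem_powerset.2 hCS, hC⟩)

theorem exists_isAntidiagonal_card_eq_antidiagRank (S : Finset (α × β)) :
    ∃ C ⊆ S, IsAntidiagonal C ∧ C.card = antidiagRank S := by
  classical
  have hne : (S.powerset.filter IsAntidiagonal).Nonempty := ⟨∅, by simp [IsAntidiagonal]⟩
  obtain ⟨C, hC, hcard⟩ := Finset.exists_mem_eq_sup _ hne Finset.card
  rw [Finset.mem_filter, Finset.mem_powerset] at hC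
  exact ⟨C, hC.1, hC.2, hcard.symm⟩

theorem antidiagRank_union_le (S T : Finset (α × β)) :
    antidiagRank (S ∪ T) ≤ antidiagRank S + antidiagRank T := by
  obtain ⟨C, hCST, hC, hcard⟩ := exists_isAntidiagonal_card_eq_antidiagRank (S ∪ T)
  have hCS : IsAntidiagonal (C ∩ S) := hC.mono (by simp)
  have hCT : IsAntidiagonal (C ∩ T) := hC.mono (by simp)
  calc antidiagRank (S ∪ T) = (C ∩ S ∪ C ∩ T).card := by
        rw [← Finset.inter_union_distrib_left, Finset.inter_eq_left.2 hCST, hcard]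
    _ ≤ (C ∩ S).card + (C ∩ T).card := Finset.card_union_le _ _
    _ ≤ antidiagRank S + antidiagRank T :=
        Nat.add_le_add (hCS.card_le_antidiagRank Finset.inter_subset_right)
          (hCT.card_le_antidiagRank Finset.inter_subset_right)

theorem antidiagRank_le_one {S : Finset (α × β)} (hS : ∀ x ∈ S, ∀ y ∈ S, ¬ StrictNE x y) :
    antidiagRank S ≤ 1 := by
  obtain ⟨C, hCS, hC, hcard⟩ := exists_isAntidiagonal_card_eq_antidiagRank S
  rw [← hcard, Finset.card_le_one]
  intro x hx y hy
  by_contra hxy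
  exact (hC hx hy hxy).elim (hS x (hCS hx) y (hCS hy)) (hS y (hCS hy) x (hCS hx))

theorem antidiagRank_empty : antidiagRank (∅ : Finset (α × β)) = 0 := by
  simp [antidiagRank, Finset.filter_singleton, IsAntidiagonal]

theorem isAntidiagonal_map (f : α ↪o γ) (g : β ↪o δ) {C : Finset (α × β)} :
    IsAntidiagonal (C.map (f.toEmbedding.prodMap g.toEmbedding)) ↔ IsAntidiagonal C := by
  let e : (StrictNE : α × β → α × β → Prop) ↪r (StrictNE : γ × δ → γ × δ → Prop) :=
    ⟨f.toEmbedding.prodMap g.toEmbedding, by simp [StrictNE]⟩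
  rw [IsAntidiagonal, Finset.coe_map]
  exact IsChain.image_relEmbedding_iff (φ := e)

theorem antidiagRank_map (f : α ↪o γ) (g : β ↪o δ) (S : Finset (α × β)) :
    antidiagRank (S.map (f.toEmbedding.prodMap g.toEmbedding)) = antidiagRank S := by
  apply le_antisymm
  · obtain ⟨D, hDS, hD, hcard⟩ := exists_isAntidiagonal_card_eq_antidiagRank
      (S.map (f.toEmbedding.prodMap g.toEmbedding))
    obtain ⟨C, hCS, rfl⟩ := Finset.subset_map_iff.1 hDS
    rw [← hcard, Finset.card_map]
    exact ((isAntidiagonal_map f g).1 hD).card_le_antidiagRank hCS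
  · obtain ⟨C, hCS, hC, hcard⟩ := exists_isAntidiagonal_card_eq_antidiagRank S
    rw [← hcard, ← Finset.card_map (f.toEmbedding.prodMap g.toEmbedding)]
    exact ((isAntidiagonal_map f g).2 hC).card_le_antidiagRank (Finset.map_subset_map.2 hCS)

end Antidiagonal

section Divisibility

theorem prod_X_dvd_monomial_iff {K σ : Type*} [CommSemiring K] (T : Finset σ) (d : σ →₀ ℕ)
    {c : K} (hc : c ≠ 0) :
    ∏ x ∈ T, (MvPolynomial.X x : MvPolynomial σ K) ∣ MvPolynomial.monomial d c ↔
      T ⊆ d.support := by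
  classical
  have prod_X_eq : ∏ x ∈ T, (MvPolynomial.X x : MvPolynomial σ K) =
      MvPolynomial.monomial (∑ x ∈ T, Finsupp.single x 1) 1 :=
    (MvPolynomial.monomial_sum_one T fun x => Finsupp.single x 1).symm
  have sum_single_apply (v : σ) :
      (∑ x ∈ T, Finsupp.single x 1 : σ →₀ ℕ) v = if v ∈ T then 1 else 0 := by
    simp [Finsupp.finsetSum_apply, Finsupp.single_apply]
  rw [prod_X_eq, MvPolynomial.monomial_dvd_monomial]
  simp only [hc, false_or, one_dvd, and_true, Finsupp.le_def, sum_single_apply,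
    Finset.subset_iff, Finsupp.mem_support_iff]
  refine forall_congr' fun v => ?_
  split_ifs with hv <;> simp [hv, Nat.one_le_iff_ne_zero]

variable {K : Type*} [CommRing K] {m n : ℕ}

theorem genMon_eq_prod_antidiagonal (A : Finset (Fin m)) (B : Finset (Fin n))
    (h : A.card = B.card) :
    genMon K A B h = ∏ x ∈ antidiagonal A B h, MvPolynomial.X x := by
  rw [antidiagonal, Finset.prod_map]
  rfl

theorem isGreatest_card_genMon_dvd_monomial (d : (Fin m × Fin n) →₀ ℕ) {c : K} (hc : c ≠ 0)
    (p : Fin m → Prop) (q : Fin n → Prop) [DecidablePred p] [DecidablePred q] :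
    IsGreatest {r : ℕ | ∃ (A : Finset (Fin m)) (B : Finset (Fin n))
        (hA : A.card = r) (hB : B.card = r), (∀ a ∈ A, p a) ∧ (∀ b ∈ B, q b) ∧
          genMon K A B (hA.trans hB.symm) ∣ MvPolynomial.monomial d c}
      (antidiagRank (d.support.filter fun x => p x.1 ∧ q x.2)) := by
  simp only [genMon_eq_prod_antidiagonal, prod_X_dvd_monomial_iff _ _ hc]
  constructor
  · obtain ⟨C, hCS, hC, hcard⟩ := exists_isAntidiagonal_card_eq_antidiagRank
      (d.support.filter fun x => p x.1 ∧ q x.2)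
    have hpq : ∀ x ∈ C, p x.1 ∧ q x.2 := fun x hx => (Finset.mem_filter.1 (hCS hx)).2
    refine ⟨C.image Prod.fst, C.image Prod.snd,
      (Finset.card_image_of_injOn hC.injOn_fst).trans hcard,
      (Finset.card_image_of_injOn hC.injOn_snd).trans hcard,
      Finset.forall_mem_image.2 fun x hx => (hpq x hx).1,
      Finset.forall_mem_image.2 fun x hx => (hpq x hx).2, ?_⟩
    rw [hC.antidiagonal_image_fst_image_snd]
    exact hCS.trans (Finset.filter_subset _ _)
  · rintro r ⟨A, B, rfl, hB, hAp, hBq, hAB⟩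
    rw [← card_antidiagonal A B hB.symm]
    refine (isAntidiagonal_antidiagonal A B hB.symm).card_le_antidiagRank fun x hx => ?_
    exact Finset.mem_filter.2 ⟨hAB hx, hAp _ (fst_mem_of_mem_antidiagonal hx),
      hBq _ (snd_mem_of_mem_antidiagonal hx)⟩

end Divisibility

section Crossing

variable {β : Type*} [LinearOrder β] {P Q : Finset (ℕ × β)} {r : ℕ}

/-- The points of `P` above row `r` followed by the points of `Q` from row `r` on. -/
def glue (r : ℕ) (P Q : Finset (ℕ × β)) : Finset (ℕ × β) :=
  (P.filter fun x => x.1 < r) ∪ Q.filter fun x => ¬ x.1 < r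

/-- The condition on two antidiagonals under which `glue r P Q` is an antidiagonal. -/
def Glueable (r : ℕ) (P Q : Finset (ℕ × β)) : Prop :=
  ∀ x ∈ P, x.1 < r → ∀ y ∈ Q, r ≤ y.1 → y.2 < x.2

theorem mem_glue {x : ℕ × β} :
    x ∈ glue r P Q ↔ (x ∈ P ∧ x.1 < r) ∨ (x ∈ Q ∧ r ≤ x.1) := by
  simp [glue]

theorem card_glue (r : ℕ) (P Q : Finset (ℕ × β)) :
    (glue r P Q).card =
      (P.filter fun x => x.1 < r).card + (Q.filter fun x => ¬ x.1 < r).card := by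
  refine Finset.card_union_of_disjoint (Finset.disjoint_left.2 fun x hxP hxQ => ?_)
  exact (Finset.mem_filter.1 hxQ).2 (Finset.mem_filter.1 hxP).2

theorem card_glue_add_card_glue (r : ℕ) (P Q : Finset (ℕ × β)) :
    (glue r P Q).card + (glue r Q P).card = P.card + Q.card := by
  rw [card_glue, card_glue,
    ← Finset.card_filter_add_card_filter_not (s := P) fun x => x.1 < r,
    ← Finset.card_filter_add_card_filter_not (s := Q) fun x => x.1 < r]
  ring

theorem Glueable.isAntidiagonal_glue (hPQ : Glueable r P Q) (hP : IsAntidiagonal P)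
    (hQ : IsAntidiagonal Q) : IsAntidiagonal (glue r P Q) := by
  intro x hx y hy hxy
  rcases mem_glue.1 hx with ⟨hx, hxr⟩ | ⟨hx, hxr⟩ <;>
    rcases mem_glue.1 hy with ⟨hy, hyr⟩ | ⟨hy, hyr⟩
  · exact hP hx hy hxy
  · exact Or.inl ⟨hxr.trans_le hyr, hPQ x hx hxr y hy hyr⟩
  · exact Or.inr ⟨hyr.trans_le hxr, hPQ y hy hyr x hx hxr⟩
  · exact hQ hx hy hxy

theorem glueable_succ_of_not_glueable (hP : IsAntidiagonal P) (hQ : IsAntidiagonal Q)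
    (h : ¬ Glueable r P Q) : Glueable (r + 1) Q P := by
  simp only [Glueable, not_forall, not_lt] at h
  obtain ⟨x, hx, hxr, y, hy, hyr, hxy⟩ := h
  intro u hu hur v hv hvr
  calc v.2 < x.2 := hP.snd_lt_of_fst_lt hx hv (by lia)
    _ ≤ y.2 := hxy
    _ ≤ u.2 := hQ.snd_le_of_fst_le hu hy (by lia)

theorem exists_glueable_and_glueable (hP : IsAntidiagonal P) (hQ : IsAntidiagonal Q) {s i : ℕ}
    (hsi : s ≤ i) (hs : Glueable s Q P) (hi : Glueable i P Q) :
    ∃ r, s ≤ r ∧ r ≤ i ∧ Glueable r P Q ∧ Glueable r Q P := by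
  by_contra! hno
  have glueable_of_le : ∀ r, s ≤ r → r ≤ i → Glueable r Q P := by
    intro r hsr
    induction r, hsr using Nat.le_induction with
    | base => exact fun _ => hs
    | succ r hsr ih =>
      intro hri
      refine glueable_succ_of_not_glueable hP hQ fun hr => ?_
      exact hno r hsr (Nat.le_of_succ_le hri) hr (ih (Nat.le_of_succ_le hri))
  exact hno i hsi le_rfl hi (glueable_of_le i hsi le_rfl)

end Crossing

section CornerRank

variable (S : Finset (ℕ × ℕ))

/-- The rank of the northwest `i × j` corner of `S`; rows and columns are counted from `0`. -/
noncomputable def cornerRank (i j : ℕ) : ℕ :=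
  antidiagRank (S ∩ Finset.range i ×ˢ Finset.range j)

variable {S} in
theorem mem_inter_range_product {i j : ℕ} {x : ℕ × ℕ} :
    x ∈ S ∩ Finset.range i ×ˢ Finset.range j ↔ x ∈ S ∧ x.1 < i ∧ x.2 < j := by
  simp

theorem cornerRank_succ_left_le (i j : ℕ) : cornerRank S (i + 1) j ≤ cornerRank S i j + 1 := by
  have hsplit : S ∩ Finset.range (i + 1) ×ˢ Finset.range j =
      (S ∩ Finset.range i ×ˢ Finset.range j) ∪ S ∩ {i} ×ˢ Finset.range j := by
    ext x
    simp only [Finset.mem_union, Finset.mem_inter, Finset.mem_product, Finset.mem_range,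
      Finset.mem_singleton]
    lia
  rw [cornerRank, hsplit]
  refine (antidiagRank_union_le _ _).trans (Nat.add_le_add_left (antidiagRank_le_one ?_) _)
  simp only [Finset.mem_inter, Finset.mem_product, Finset.mem_singleton, StrictNE]
  lia

theorem cornerRank_succ_right_le (i j : ℕ) : cornerRank S i (j + 1) ≤ cornerRank S i j + 1 := by
  have hsplit : S ∩ Finset.range i ×ˢ Finset.range (j + 1) =
      (S ∩ Finset.range i ×ˢ Finset.range j) ∪ S ∩ Finset.range i ×ˢ {j} := by
    ext x
    simp only [Finset.mem_union, Finset.mem_inter, Finset.mem_product, Finset.mem_range,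
      Finset.mem_singleton]
    lia
  rw [cornerRank, hsplit]
  refine (antidiagRank_union_le _ _).trans (Nat.add_le_add_left (antidiagRank_le_one ?_) _)
  simp only [Finset.mem_inter, Finset.mem_product, Finset.mem_singleton, StrictNE]
  lia

theorem IsAntidiagonal.exists_fst_lt_iff_le_snd {β : Type*} [LinearOrder β]
    {Q : Finset (ℕ × β)} (hQ : IsAntidiagonal Q) {i : ℕ} (hQi : ∀ x ∈ Q, x.1 < i) (b : β) :
    ∃ s ≤ i, ∀ x ∈ Q, x.1 < s ↔ b ≤ x.2 := by
  refine ⟨(Q.filter fun x => b ≤ x.2).sup fun x => x.1 + 1, ?_, fun x hx => ?_⟩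
  · exact Finset.sup_le fun x hx => hQi x (Finset.mem_filter.1 hx).1
  · rw [Finset.lt_sup_iff]
    refine ⟨fun ⟨y, hy, hxy⟩ => ?_, fun hbx =>
      ⟨x, Finset.mem_filter.2 ⟨hx, hbx⟩, x.1.lt_succ_self⟩⟩
    obtain ⟨hyQ, hby⟩ := Finset.mem_filter.1 hy
    exact hby.trans (hQ.snd_le_of_fst_le hx hyQ (Nat.lt_succ_iff.1 hxy))

variable {S} in
theorem exists_recombination {P Q : Finset (ℕ × ℕ)} {i i' j j' : ℕ} (hi : i ≤ i') (hj : j ≤ j')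
    (hP : IsAntidiagonal P) (hQ : IsAntidiagonal Q)
    (hPS : P ⊆ S ∩ Finset.range i' ×ˢ Finset.range j)
    (hQS : Q ⊆ S ∩ Finset.range i ×ˢ Finset.range j') :
    ∃ P' ⊆ S ∩ Finset.range i' ×ˢ Finset.range j', ∃ Q' ⊆ S ∩ Finset.range i ×ˢ Finset.range j,
      IsAntidiagonal P' ∧ IsAntidiagonal Q' ∧ P'.card + Q'.card = P.card + Q.card := by
  have memP {x} (hx : x ∈ P) := mem_inter_range_product.1 (hPS hx)
  have memQ {x} (hx : x ∈ Q) := mem_inter_range_product.1 (hQS hx)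
  obtain ⟨s, hsi, hs⟩ := hQ.exists_fst_lt_iff_le_snd (fun x hx => (memQ hx).2.1) j
  have hsQP : Glueable s Q P := fun x hx hxs y hy _ =>
    (memP hy).2.2.trans_le ((hs x hx).1 hxs)
  have hiPQ : Glueable i P Q := fun _ _ _ y hy hiy => absurd (memQ hy).2.1 hiy.not_gt
  obtain ⟨r, hsr, hri, hPQ, hQP⟩ := exists_glueable_and_glueable hP hQ hsi hsQP hiPQ
  refine ⟨glue r Q P, fun x hx => ?_, glue r P Q, fun x hx => ?_,
    hQP.isAntidiagonal_glue hQ hP, hPQ.isAntidiagonal_glue hP hQ, ?_⟩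
  · rw [mem_inter_range_product]
    rcases mem_glue.1 hx with ⟨hx, -⟩ | ⟨hx, -⟩
    · exact ⟨(memQ hx).1, (memQ hx).2.1.trans_le hi, (memQ hx).2.2⟩
    · exact ⟨(memP hx).1, (memP hx).2.1, (memP hx).2.2.trans_le hj⟩
  · rw [mem_inter_range_product]
    rcases mem_glue.1 hx with ⟨hx, hxr⟩ | ⟨hx, hrx⟩
    · exact ⟨(memP hx).1, hxr.trans_le hri, (memP hx).2.2⟩
    · have hsx : ¬ x.1 < s := (hsr.trans hrx).not_gt
      exact ⟨(memQ hx).1, (memQ hx).2.1, not_le.1 (mt (hs x hx).2 hsx)⟩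
  · rw [card_glue_add_card_glue, add_comm]

theorem cornerRank_monge {i i' j j' : ℕ} (hi : i ≤ i') (hj : j ≤ j') :
    cornerRank S i j' + cornerRank S i' j ≤ cornerRank S i' j' + cornerRank S i j := by
  obtain ⟨P, hPS, hP, hPcard⟩ := exists_isAntidiagonal_card_eq_antidiagRank
    (S ∩ Finset.range i' ×ˢ Finset.range j)
  obtain ⟨Q, hQS, hQ, hQcard⟩ := exists_isAntidiagonal_card_eq_antidiagRank
    (S ∩ Finset.range i ×ˢ Finset.range j')
  obtain ⟨P', hPS', Q', hQS', hP', hQ', hcard⟩ := exists_recombination hi hj hP hQ hPS hQS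
  calc cornerRank S i j' + cornerRank S i' j = P'.card + Q'.card := by
        rw [cornerRank, cornerRank, ← hPcard, ← hQcard, hcard, add_comm]
    _ ≤ cornerRank S i' j' + cornerRank S i j :=
        Nat.add_le_add (hP'.card_le_antidiagRank hPS') (hQ'.card_le_antidiagRank hQS')

end CornerRank

/-- The local conditions that characterise the corner rank functions
`R i j = #{a < i : f a < j}` of partial permutations `f`, with rows and columns counted
from `0`. -/
structure IsRankTable (R : ℕ → ℕ → ℕ) : Prop where
  zero_left (j : ℕ) : R 0 j = 0
  zero_right (i : ℕ) : R i 0 = 0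
  succ_left_le (i j : ℕ) : R (i + 1) j ≤ R i j + 1
  succ_right_le (i j : ℕ) : R i (j + 1) ≤ R i j + 1
  monge (i j : ℕ) : R i (j + 1) + R (i + 1) j ≤ R (i + 1) (j + 1) + R i j

theorem isRankTable_cornerRank (S : Finset (ℕ × ℕ)) : IsRankTable (cornerRank S) where
  zero_left j := by simp [cornerRank, antidiagRank_empty]
  zero_right i := by simp [cornerRank, antidiagRank_empty]
  succ_left_le := cornerRank_succ_left_le S
  succ_right_le := cornerRank_succ_right_le S
  monge i j := cornerRank_monge S i.le_succ j.le_succ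

/-- The mixed second difference of `R` at `(i, j)` is positive; for the corner rank function of
a partial permutation `f` this says `f i = j`. -/
def IsDot (R : ℕ → ℕ → ℕ) (i j : ℕ) : Prop :=
  R i (j + 1) + R (i + 1) j < R (i + 1) (j + 1) + R i j

theorem IsDot.swap {R : ℕ → ℕ → ℕ} {i j : ℕ} (h : IsDot R i j) :
    IsDot (Function.swap R) j i := by
  simpa only [IsDot, Function.swap, add_comm (R (i + 1) j)] using h

namespace IsRankTable

variable {R : ℕ → ℕ → ℕ} {i j k : ℕ}

theorem swap (h : IsRankTable R) : IsRankTable (Function.swap R) where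
  zero_left := h.zero_right
  zero_right := h.zero_left
  succ_left_le i j := h.succ_right_le j i
  succ_right_le i j := h.succ_left_le j i
  monge i j := by simpa only [Function.swap, add_comm (R (j + 1) i)] using h.monge j i

theorem succ_left_add_le_of_le (h : IsRankTable R) (i : ℕ) (hjk : j ≤ k) :
    R (i + 1) j + R i k ≤ R (i + 1) k + R i j := by
  induction k, hjk using Nat.le_induction with
  | base => exact le_rfl
  | succ k _ ih =>
    have hmonge := h.monge i k
    lia

theorem le_succ_left (h : IsRankTable R) (i j : ℕ) : R i j ≤ R (i + 1) j := by
  simpa [h.zero_right] using h.succ_left_add_le_of_le i j.zero_le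

theorem le_left (h : IsRankTable R) (i j : ℕ) : R i j ≤ i := by
  induction i with
  | zero => exact (h.zero_left j).le
  | succ i ih => exact (h.succ_left_le i j).trans (Nat.succ_le_succ ih)

theorem succ_left_eq_of_isDot (h : IsRankTable R) (hij : IsDot R i j) (k : ℕ) :
    R (i + 1) k = R i k + if j < k then 1 else 0 := by
  unfold IsDot at hij
  split_ifs with hjk
  · have hmonge := h.succ_left_add_le_of_le i (Nat.succ_le_of_lt hjk)
    have hj := h.le_succ_left i j
    have hk := h.succ_left_le i k
    lia
  · have hmonge := h.succ_left_add_le_of_le i (not_lt.1 hjk)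
    have hj := h.succ_left_le i (j + 1)
    have hk := h.le_succ_left i k
    lia

theorem isDot_right_unique (h : IsRankTable R) (hij : IsDot R i j) (hik : IsDot R i k) :
    j = k := by
  wlog hjk : j < k generalizing j k
  · rcases (not_lt.1 hjk).lt_or_eq with hkj | hkj
    · exact (this hik hij hkj).symm
    · exact hkj.symm
  · have hj := h.succ_left_eq_of_isDot hij k
    have hk := h.succ_left_eq_of_isDot hik k
    simp only [hjk, lt_irrefl, if_true, if_false] at hj hk
    lia

theorem isDot_left_unique (h : IsRankTable R) (hik : IsDot R i k) (hjk : IsDot R j k) :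
    i = j :=
  h.swap.isDot_right_unique hik.swap hjk.swap

theorem exists_isDot_of_lt (h : IsRankTable R) (hik : R i k < R (i + 1) k) :
    ∃ j, IsDot R i j := by
  by_contra! hno
  have le_row (k : ℕ) : R (i + 1) k ≤ R i k := by
    induction k with
    | zero => rw [h.zero_right, h.zero_right]
    | succ k ih =>
      have hk := not_lt.1 (hno k)
      lia
  exact (le_row k).not_gt hik

theorem exists_isDot_left (h : IsRankTable R) (hrow : ∀ i, ∃ j, R i j = i) (i : ℕ) :
    ∃ j, IsDot R i j := by
  obtain ⟨k, hk⟩ := hrow (i + 1)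
  refine h.exists_isDot_of_lt (k := k) ?_
  have hi := h.le_left i k
  lia

theorem exists_perm_isDot (h : IsRankTable R) (hrow : ∀ i, ∃ j, R i j = i)
    (hcol : ∀ j, ∃ i, R i j = j) : ∃ σ : Equiv.Perm ℕ, ∀ i, IsDot R i (σ i) := by
  choose f hf using h.exists_isDot_left hrow
  have f_injective : Function.Injective f := fun a b hab =>
    h.isDot_left_unique (hf a) (hab ▸ hf b)
  have f_surjective : Function.Surjective f := fun j => by
    obtain ⟨i, hi⟩ := h.swap.exists_isDot_left hcol j
    exact ⟨i, h.isDot_right_unique (hf i) hi.swap⟩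
  exact ⟨Equiv.ofBijective f ⟨f_injective, f_surjective⟩, hf⟩

end IsRankTable

section Rank

variable {w : Equiv.Perm ℕ} {m : ℕ}

/-- The conjugate of `σ` by `i ↦ i + 1`, as a permutation of the positive integers. -/
def shiftPerm (σ : Equiv.Perm ℕ) : Equiv.Perm ℕ where
  toFun
    | 0 => 0
    | i + 1 => σ i + 1
  invFun
    | 0 => 0
    | i + 1 => σ.symm i + 1
  left_inv := by rintro (_ | i) <;> simp
  right_inv := by rintro (_ | i) <;> simp

theorem rnk_succ_left (hw : w 0 = 0) (i j : ℕ) :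
    rnk w (i + 1) j = rnk w i j + if w (i + 1) ≤ j then 1 else 0 := by
  have w_pos : 1 ≤ w (i + 1) := by
    rw [Nat.one_le_iff_ne_zero, ← hw, w.injective.ne_iff]
    exact i.succ_ne_zero
  rw [rnk, rnk, ← Finset.insert_Icc_right_eq_Icc_add_one (by lia), Finset.filter_insert]
  split_ifs with hmem hle hle
  · rw [Finset.card_insert_of_notMem (by simp)]
  · exact absurd (Finset.mem_Icc.1 hmem).2 hle
  · exact absurd (Finset.mem_Icc.2 ⟨w_pos, hle⟩) hmem
  · rfl

theorem rnk_inv (w : Equiv.Perm ℕ) (i j : ℕ) : rnk w⁻¹ j i = rnk w i j := by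
  refine Finset.card_bij (fun b _ => w⁻¹ b) ?_ (fun _ _ _ _ hab => w⁻¹.injective hab) ?_
  · intro b hb
    simpa [and_comm] using hb
  · intro a ha
    exact ⟨w a, by simpa [and_comm] using ha, by simp⟩

theorem IsRankTable.exists_perm_rnk_eq {R : ℕ → ℕ → ℕ} (h : IsRankTable R)
    (hrow : ∀ i, ∃ j, R i j = i) (hcol : ∀ j, ∃ i, R i j = j) :
    ∃ w : Equiv.Perm ℕ, w 0 = 0 ∧ ∀ i j, rnk w i j = R i j := by
  obtain ⟨σ, hσ⟩ := h.exists_perm_isDot hrow hcol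
  refine ⟨shiftPerm σ, rfl, fun i j => ?_⟩
  induction i with
  | zero => simp [rnk, h.zero_left]
  | succ i ih =>
    rw [rnk_succ_left rfl, ih, h.succ_left_eq_of_isDot (hσ i)]
    rfl

theorem desR_subset_Icc (hw : w 0 = 0)
    (h : ∀ i ≥ m, ∀ j, rnk w (i + 1) j = min j (rnk w i j + 1)) :
    DesR w ⊆ Set.Icc 1 m := by
  rintro i ⟨hi, hdes⟩
  refine ⟨hi, not_lt.1 fun hmi => ?_⟩
  obtain ⟨k, rfl⟩ := Nat.exists_eq_succ_of_ne_zero (Nat.one_le_iff_ne_zero.1 hi)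
  set j := w (k + 1 + 1) with hj
  -- Row `k + 1` adds nothing to column `j`, so this column is already full and cannot grow again.
  have row_k : rnk w (k + 1) j = rnk w k j := by
    rw [rnk_succ_left hw, if_neg hdes.not_ge, add_zero]
  have row_succ : rnk w (k + 1 + 1) j = rnk w (k + 1) j + 1 := by
    rw [rnk_succ_left hw, if_pos hj.ge]
  have full := h k (by lia) j
  have grow := h (k + 1) hmi.le j
  lia

theorem mem_SInfty_of_rnk_eq_min (hw : w 0 = 0) (h : ∀ i ≥ m, ∀ j, rnk w i j = min i j) :
    w ∈ SInfty := by
  have apply_succ (i : ℕ) (hi : m ≤ i) : w (i + 1) = i + 1 := by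
    have step (j : ℕ) : min (i + 1) j = min i j + if w (i + 1) ≤ j then 1 else 0 := by
      rw [← h i hi, ← h (i + 1) (by lia), rnk_succ_left hw]
    have hle : w (i + 1) ≤ i + 1 := by
      have hstep := step (i + 1)
      split_ifs at hstep <;> lia
    have hgt : ¬ w (i + 1) ≤ i := by
      have hstep := step i
      split_ifs at hstep <;> lia
    lia
  refine ⟨hw, (Set.finite_Iic m).subset fun i hi => Set.mem_Iic.2 (not_lt.1 fun hmi => hi ?_)⟩
  obtain ⟨k, rfl⟩ := Nat.exists_eq_succ_of_ne_zero (Nat.ne_zero_of_lt hmi)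
  exact apply_succ k (Nat.lt_succ_iff.1 hmi)

end Rank

section Saturation

variable {L : ℕ → ℕ → ℕ} {m n i j : ℕ}

/-- The extension of the `m × n` corner of a rank table `L` that grows as fast as possible
outside this corner. Truncated subtraction is intended: `i - m` and `j - n` are the numbers of
rows and columns beyond the corner. -/
def saturate (m n : ℕ) (L : ℕ → ℕ → ℕ) (i j : ℕ) : ℕ :=
  min (min i j) (L (min i m) (min j n) + (i - m) + (j - n))

theorem saturate_swap (m n : ℕ) (L : ℕ → ℕ → ℕ) (i j : ℕ) :
    saturate n m (Function.swap L) j i = saturate m n L i j := by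
  rw [saturate, saturate, min_comm j i, Function.swap, add_right_comm]

theorem saturate_eq_min_of_add_le_left (L : ℕ → ℕ → ℕ) (hi : m + n ≤ i) (j : ℕ) :
    saturate m n L i j = min i j := by
  unfold saturate
  lia

theorem saturate_eq_min_of_add_le_right (L : ℕ → ℕ → ℕ) (i : ℕ) (hj : m + n ≤ j) :
    saturate m n L i j = min i j := by
  rw [← saturate_swap, saturate_eq_min_of_add_le_left _ (by lia), min_comm]

theorem saturate_succ_left (L : ℕ → ℕ → ℕ) (hi : m ≤ i) (j : ℕ) :
    saturate m n L (i + 1) j = min j (saturate m n L i j + 1) := by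
  unfold saturate
  rw [min_eq_right hi, min_eq_right (hi.trans i.le_succ)]
  lia

theorem saturate_succ_right (L : ℕ → ℕ → ℕ) (i : ℕ) (hj : n ≤ j) :
    saturate m n L i (j + 1) = min i (saturate m n L i j + 1) := by
  rw [← saturate_swap, saturate_succ_left _ hj, saturate_swap]

namespace IsRankTable

theorem saturate_eq (h : IsRankTable L) (hi : i ≤ m) (hj : j ≤ n) :
    saturate m n L i j = L i j := by
  have hleft := h.le_left i j
  have hright : L i j ≤ j := h.swap.le_left j i
  rw [saturate, min_eq_left hi, min_eq_left hj]
  lia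

theorem saturate_succ_left_le (h : IsRankTable L) (m n i j : ℕ) :
    saturate m n L (i + 1) j ≤ saturate m n L i j + 1 := by
  rcases le_or_gt m i with hi | hi
  · rw [saturate_succ_left L hi]
    exact min_le_right _ _
  · have hL := h.succ_left_le i (min j n)
    unfold saturate
    rw [min_eq_left hi.le, min_eq_left (Nat.succ_le_of_lt hi)]
    lia

theorem saturate_succ_right_le (h : IsRankTable L) (m n i j : ℕ) :
    saturate m n L i (j + 1) ≤ saturate m n L i j + 1 := by
  simpa only [saturate_swap] using h.swap.saturate_succ_left_le n m j i

theorem saturate_monge_of_le (h : IsRankTable L) (n : ℕ) (hi : m ≤ i) (j : ℕ) :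
    saturate m n L i (j + 1) + saturate m n L (i + 1) j ≤
      saturate m n L (i + 1) (j + 1) + saturate m n L i j := by
  have hle := h.saturate_succ_right_le m n i j
  have hcap : saturate m n L i (j + 1) ≤ j + 1 := (min_le_left _ _).trans (min_le_right _ _)
  rw [saturate_succ_left L hi, saturate_succ_left L hi]
  lia

theorem saturate_monge (h : IsRankTable L) (m n i j : ℕ) :
    saturate m n L i (j + 1) + saturate m n L (i + 1) j ≤
      saturate m n L (i + 1) (j + 1) + saturate m n L i j := by
  rcases le_or_gt m i with hi | hi
  · exact h.saturate_monge_of_le n hi j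
  rcases le_or_gt n j with hj | hj
  · have hmonge := h.swap.saturate_monge_of_le m hj i
    simp only [saturate_swap] at hmonge
    lia
  · rw [h.saturate_eq hi hj, h.saturate_eq hi hj.le, h.saturate_eq hi.le hj,
      h.saturate_eq hi.le hj.le]
    exact h.monge i j

theorem isRankTable_saturate (h : IsRankTable L) (m n : ℕ) : IsRankTable (saturate m n L) where
  zero_left j := by simp [saturate]
  zero_right i := by simp [saturate]
  succ_left_le := h.saturate_succ_left_le m n
  succ_right_le := h.saturate_succ_right_le m n
  monge := h.saturate_monge m n

theorem exists_mem_SmnInfty (h : IsRankTable L) (m n : ℕ) :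
    ∃ w ∈ SmnInfty m n, ∀ i j, i ≤ m → j ≤ n → rnk w i j = L i j := by
  have hrow (i : ℕ) : ∃ j, saturate m n L i j = i :=
    ⟨max i (m + n), by rw [saturate_eq_min_of_add_le_right L i (le_max_right _ _)]; simp⟩
  have hcol (j : ℕ) : ∃ i, saturate m n L i j = j :=
    ⟨max j (m + n), by rw [saturate_eq_min_of_add_le_left L (le_max_right _ _)]; simp⟩
  obtain ⟨w, hw, hrnk⟩ := (h.isRankTable_saturate m n).exists_perm_rnk_eq hrow hcol
  have hw_inv : w⁻¹ 0 = 0 := Equiv.Perm.inv_eq_iff_eq.2 hw.symm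
  refine ⟨w, ⟨mem_SInfty_of_rnk_eq_min (m := m + n) hw fun i hi j => ?_,
    desR_subset_Icc hw fun i hi j => ?_, desR_subset_Icc hw_inv fun j hj i => ?_⟩,
    fun i j hi hj => ?_⟩
  · rw [hrnk, saturate_eq_min_of_add_le_left L hi]
  · rw [hrnk, hrnk, saturate_succ_left L hi]
  · rw [rnk_inv, rnk_inv, hrnk, hrnk, saturate_succ_right L i hj]
  · rw [hrnk, h.saturate_eq hi hj]

end IsRankTable

end Saturation

theorem antidiagRank_filter_eq_cornerRank {m n : ℕ} (S : Finset (Fin m × Fin n)) (i j : ℕ) :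
    antidiagRank (S.filter fun x : Fin m × Fin n => (x.1 : ℕ) + 1 ≤ i ∧ (x.2 : ℕ) + 1 ≤ j) =
      cornerRank (S.map ((Fin.valOrderEmb m).toEmbedding.prodMap (Fin.valOrderEmb n).toEmbedding))
        i j := by
  rw [← antidiagRank_map (Fin.valOrderEmb m) (Fin.valOrderEmb n), cornerRank]
  congr 1
  ext x
  simp only [Finset.mem_map, Finset.mem_filter, mem_inter_range_product]
  constructor
  · rintro ⟨y, ⟨hy, hyi, hyj⟩, rfl⟩
    exact ⟨⟨y, hy, rfl⟩, hyi, hyj⟩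
  · rintro ⟨⟨y, hy, rfl⟩, hyi, hyj⟩
    exact ⟨y, ⟨hy, hyi, hyj⟩, rfl⟩

theorem statement10_general (K : Type*) [CommRing K] (m n : ℕ) (d : (Fin m × Fin n) →₀ ℕ) (c : K)
    (hc : c ≠ 0) :
    ∃ w ∈ SmnInfty m n, ∀ i j : ℕ, i ≤ m → j ≤ n →
      IsGreatest {r : ℕ | ∃ (A : Finset (Fin m)) (B : Finset (Fin n))
          (hA : A.card = r) (hB : B.card = r),
          (∀ a ∈ A, (a : ℕ) + 1 ≤ i) ∧ (∀ b ∈ B, (b : ℕ) + 1 ≤ j) ∧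
            genMon K A B (hA.trans hB.symm) ∣ MvPolynomial.monomial d c}
        (rnk w i j) := by
  obtain ⟨w, hw, hrnk⟩ := (isRankTable_cornerRank (d.support.map
    ((Fin.valOrderEmb m).toEmbedding.prodMap (Fin.valOrderEmb n).toEmbedding))).exists_mem_SmnInfty
      m n
  refine ⟨w, hw, fun i j hi hj => ?_⟩
  rw [hrnk i j hi hj, ← antidiagRank_filter_eq_cornerRank]
  exact isGreatest_card_genMon_dvd_monomial d hc (fun a => (a : ℕ) + 1 ≤ i)
    fun b => (b : ℕ) + 1 ≤ j

/-- For a monomial `M` in `K[u_{ij} : (i,j) ∈ [m] × [n]]` there is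
`w ∈ S^{m,n}_∞` with `r_M(i,j) = r_w(i,j)` for all `(i,j) ∈ [m] × [n]`, where
`r_M(i,j)` is the largest `r` such that `u_{AB} ∣ M` for some `A ⊆ [i]`, `B ⊆ [j]`
with `|A| = |B| = r`. -/
theorem statement10 (K : Type*) [Field K] (m n : ℕ) (hm : 1 ≤ m) (hn : 1 ≤ n)
    (M : MvPolynomial (Fin m × Fin n) K)
    (hM : ∃ (d : (Fin m × Fin n) →₀ ℕ) (c : K), c ≠ 0 ∧ M = MvPolynomial.monomial d c) :
    ∃ w ∈ SmnInfty m n, ∀ i j : ℕ, 1 ≤ i → i ≤ m → 1 ≤ j → j ≤ n →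
      IsGreatest {r : ℕ | ∃ (A : Finset (Fin m)) (B : Finset (Fin n))
          (hA : A.card = r) (hB : B.card = r),
          (∀ a ∈ A, (a : ℕ) + 1 ≤ i) ∧ (∀ b ∈ B, (b : ℕ) + 1 ≤ j) ∧
            genMon K A B (hA.trans hB.symm) ∣ M}
        (rnk w i j) := by
  obtain ⟨d, c, hc, rfl⟩ := hM
  obtain ⟨w, hw, hgreatest⟩ := statement10_general K m n d c hc
  exact ⟨w, hw, fun i j _ hi _ hj => hgreatest i j hi hj⟩

end Paper
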